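/- arXiv:2512.15428 — 5 statements merged into one kernel-verified Lean document; each statement's English description precedes it below -/
import Mathlib

section
/- Let d be a positive integer, let ρ and E be positive semidefinite Hermitian d×d complex matrices, and let A be a Hermitian d×d complex matrix. Then (Re Tr[ρAE])² ≤ |Tr[ρAE]|² ≤ Tr[ρE] · Tr[ρAEA]. -/
open Matrix
open scoped ComplexOrder

/-! For positive semidefinite `ρ` and `E`, the sesquilinear form `⟪X, Y⟫ = Tr[ρ Y E Xᴴ]` on
matrices is a semi-inner product: writing `ρ = Bᴴ B` gives `⟪X, X⟫ = Tr[B X E Xᴴ Bᴴ] ≥ 0`. The upper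
bound is its Cauchy–Schwarz inequality at `X = 1`, `Y = A`. -/

section TraceForm

variable {𝕜 m n : Type*} [RCLike 𝕜] [Fintype m] [Fintype n]

theorem trace_mul_nonneg_of_posSemidef {P Q : Matrix n n 𝕜}
    (hP : P.PosSemidef) (hQ : Q.PosSemidef) : 0 ≤ (P * Q).trace := by
  classical
  open scoped MatrixOrder in
  obtain ⟨B, rfl⟩ := CStarAlgebra.nonneg_iff_eq_star_mul_self.mp hP.nonneg
  rw [star_eq_conjTranspose, trace_mul_cycle, trace_mul_comm, ← Matrix.mul_assoc]
  exact (hQ.mul_mul_conjTranspose_same B).trace_nonneg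

/-- The semi-inner product `⟪X, Y⟫ = Tr[ρ Y E Xᴴ]` on `m × n` matrices with positive semidefinite
weights `ρ` and `E`, used for its Cauchy–Schwarz inequality. As in Mathlib, it is conjugate-linear
in the first argument; it may be degenerate. -/
noncomputable abbrev weightedTraceCore {ρ : Matrix m m 𝕜} {E : Matrix n n 𝕜}
    (hρ : ρ.PosSemidef) (hE : E.PosSemidef) :
    PreInnerProductSpace.Core 𝕜 (Matrix m n 𝕜) where
  inner X Y := (ρ * Y * E * Xᴴ).trace
  conj_inner_symm X Y := by
    rw [starRingEnd_apply, ← trace_conjTranspose]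
    simp only [conjTranspose_mul, conjTranspose_conjTranspose, hρ.isHermitian.eq,
      hE.isHermitian.eq]
    rw [← Matrix.mul_assoc, ← Matrix.mul_assoc, trace_mul_comm]
    simp only [Matrix.mul_assoc]
  re_inner_nonneg X := by
    have h := trace_mul_nonneg_of_posSemidef hρ (hE.mul_mul_conjTranspose_same X)
    simpa only [Matrix.mul_assoc] using (RCLike.nonneg_iff.mp h).1
  add_left X Y Z := by rw [conjTranspose_add, Matrix.mul_add, trace_add]
  smul_left X Y c := by
    rw [conjTranspose_smul, Matrix.mul_smul, trace_smul, smul_eq_mul, starRingEnd_apply]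

theorem norm_trace_mul_mul_mul_conjTranspose_sq_le {ρ : Matrix m m 𝕜} {E : Matrix n n 𝕜}
    (hρ : ρ.PosSemidef) (hE : E.PosSemidef) (X Y : Matrix m n 𝕜) :
    ‖(ρ * Y * E * Xᴴ).trace‖ ^ 2 ≤
      RCLike.re (ρ * X * E * Xᴴ).trace * RCLike.re (ρ * Y * E * Yᴴ).trace := by
  let _ := weightedTraceCore hρ hE
  have cauchySchwarz := InnerProductSpace.Core.inner_mul_inner_self_le (𝕜 := 𝕜) X Y
  rwa [InnerProductSpace.Core.norm_inner_symm Y X, ← sq] at cauchySchwarz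

theorem stmt1_general {ρ E : Matrix n n 𝕜} (hρ : ρ.PosSemidef) (hE : E.PosSemidef)
    (A : Matrix n n 𝕜) :
    RCLike.re (ρ * A * E).trace ^ 2 ≤ ‖(ρ * A * E).trace‖ ^ 2 ∧
    ‖(ρ * A * E).trace‖ ^ 2 ≤
      RCLike.re (ρ * E).trace * RCLike.re (ρ * A * E * Aᴴ).trace := by
  classical
  refine ⟨sq_le_sq.mpr ((RCLike.abs_re_le_norm _).trans (le_abs_self _)), ?_⟩
  simpa only [conjTranspose_one, Matrix.mul_one] using
    norm_trace_mul_mul_mul_conjTranspose_sq_le hρ hE 1 A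

end TraceForm

/-- The Cauchy–Schwarz chain `(Re Tr[ρAE])² ≤ |Tr[ρAE]|² ≤ Tr[ρE]·Tr[ρAEA]`
for positive semidefinite `ρ`, `E` and Hermitian `A`. -/
theorem stmt1 (d : ℕ) (hd : 0 < d) (ρ E A : Matrix (Fin d) (Fin d) ℂ)
    (hρ : ρ.PosSemidef) (hE : E.PosSemidef) (hA : A.IsHermitian) :
    (((ρ * A * E).trace).re) ^ 2 ≤ ‖(ρ * A * E).trace‖ ^ 2 ∧
    ‖(ρ * A * E).trace‖ ^ 2 ≤ ((ρ * E).trace).re * ((ρ * A * E * A).trace).re := by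
  simpa only [hA.eq, RCLike.re_eq_complex_re] using stmt1_general hρ hE A
end

section
/- Let d be a positive integer, let ρ be a positive definite Hermitian d×d complex matrix, and let {E_i}_{i∈I} be a finite family of nonzero positive semidefinite Hermitian d×d matrices with Σ_i E_i = 𝟙. Then for every Hermitian d×d matrix A, Σ_i (Re Tr[ρAE_i])² / Tr[ρE_i] ≤ Re Tr[ρA²]. (Equivalently, the classical Fisher information of the measurement never exceeds the quantum Fisher information.) -/
open Matrix
open scoped ComplexOrder

/-!
For a nonnegative element `e` of a star-ordered algebra and a Hermitian positive functional `φ`,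
the sesquilinear form `φ (b * e * star a)` is positive semidefinite. Its Cauchy–Schwarz inequality
at `1` and `a` reads `‖φ (a * e)‖² ≤ φ (a * e * star a) φ e`; dividing by `φ e` and summing over
effects with `∑ e i ≤ 1` bounds the classical Fisher information by `φ (a * star a)`. Quantum
states are the functionals `φ = Tr (ρ ·)`.
-/

section PositiveFunctional

variable {𝕜 R : Type*} [RCLike 𝕜] [Ring R] [StarRing R] [PartialOrder R] [StarOrderedRing R]
  [Algebra 𝕜 R] [StarModule 𝕜 R]

/-- The semi-inner product `⟪a, b⟫ = φ (b * e * star a)` attached to a Hermitian positive functional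
`φ` and a nonnegative weight `e`. The starred factor is on the right so that
`⟪1, a⟫ = φ (a * e)`. -/
abbrev weightedPreInnerProductCore (φ : R →ₚ[𝕜] 𝕜) (hφ : ∀ a, φ (star a) = star (φ a))
    {e : R} (he : 0 ≤ e) : PreInnerProductSpace.Core 𝕜 R where
  inner a b := φ (b * e * star a)
  conj_inner_symm a b := by
    simp only [starRingEnd_apply, ← hφ, star_mul, star_star, (IsSelfAdjoint.of_nonneg he).star_eq,
      mul_assoc]
  re_inner_nonneg a :=
    (RCLike.nonneg_iff.mp (φ.map_nonneg (star_right_conjugate_nonneg he a))).1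
  add_left a b c := by rw [star_add, mul_add, map_add]
  smul_left a b r := by
    rw [star_smul, mul_smul_comm, map_smul, smul_eq_mul, starRingEnd_apply]

theorem norm_apply_mul_sq_le (φ : R →ₚ[𝕜] 𝕜) (hφ : ∀ a, φ (star a) = star (φ a))
    {e : R} (he : 0 ≤ e) (a : R) :
    ‖φ (a * e)‖ ^ 2 ≤ RCLike.re (φ (a * e * star a)) * RCLike.re (φ e) := by
  let core := weightedPreInnerProductCore φ hφ he
  have inner_eq (x y : R) : core.inner x y = φ (y * e * star x) := rfl
  have cauchy_schwarz := InnerProductSpace.Core.inner_mul_inner_self_le (𝕜 := 𝕜) a 1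
  rw [InnerProductSpace.Core.norm_inner_symm, ← sq] at cauchy_schwarz
  simpa only [inner_eq, one_mul, star_one, mul_one] using cauchy_schwarz

theorem stmt2_general {ι : Type*} (φ : R →ₚ[𝕜] 𝕜) (hφ : ∀ a, φ (star a) = star (φ a))
    (s : Finset ι) (e : ι → R) (he : ∀ i ∈ s, 0 ≤ e i) (hne : ∀ i ∈ s, φ (e i) ≠ 0)
    (hsum : ∑ i ∈ s, e i ≤ 1) (a : R) :
    ∑ i ∈ s, ‖φ (a * e i)‖ ^ 2 / RCLike.re (φ (e i)) ≤ RCLike.re (φ (a * star a)) := by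
  have score_le : ∀ i ∈ s,
      ‖φ (a * e i)‖ ^ 2 / RCLike.re (φ (e i)) ≤ RCLike.re (φ (a * e i * star a)) := fun i hi ↦
    have prob_pos : 0 < φ (e i) := (φ.map_nonneg (he i hi)).lt_of_ne' (hne i hi)
    (div_le_iff₀ (RCLike.pos_iff.mp prob_pos).1).mpr (norm_apply_mul_sq_le φ hφ (he i hi) a)
  calc ∑ i ∈ s, ‖φ (a * e i)‖ ^ 2 / RCLike.re (φ (e i))
      ≤ ∑ i ∈ s, RCLike.re (φ (a * e i * star a)) := Finset.sum_le_sum score_le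
    _ = RCLike.re (φ (a * (∑ i ∈ s, e i) * star a)) := by
      rw [Finset.mul_sum, Finset.sum_mul, map_sum, map_sum]
    _ ≤ RCLike.re (φ (a * 1 * star a)) :=
      (RCLike.le_iff_re_im.mp
        (OrderHomClass.mono φ (star_right_conjugate_le_conjugate hsum a))).1
    _ = RCLike.re (φ (a * star a)) := by rw [mul_one]

theorem sum_re_apply_mul_sq_div_le_of_isSelfAdjoint {ι : Type*} (φ : R →ₚ[𝕜] 𝕜)
    (hφ : ∀ a, φ (star a) = star (φ a)) (s : Finset ι) (e : ι → R) (he : ∀ i ∈ s, 0 ≤ e i)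
    (hne : ∀ i ∈ s, φ (e i) ≠ 0) (hsum : ∑ i ∈ s, e i ≤ 1) {a : R} (ha : IsSelfAdjoint a) :
    ∑ i ∈ s, RCLike.re (φ (a * e i)) ^ 2 / RCLike.re (φ (e i)) ≤ RCLike.re (φ (a * a)) := by
  have re_sq_le (z : 𝕜) : RCLike.re z ^ 2 ≤ ‖z‖ ^ 2 :=
    sq_le_sq.mpr ((RCLike.abs_re_le_norm z).trans (le_abs_self _))
  have prob_nonneg : ∀ i ∈ s, 0 ≤ RCLike.re (φ (e i)) := fun i hi ↦
    (RCLike.nonneg_iff.mp (φ.map_nonneg (he i hi))).1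
  calc ∑ i ∈ s, RCLike.re (φ (a * e i)) ^ 2 / RCLike.re (φ (e i))
      ≤ ∑ i ∈ s, ‖φ (a * e i)‖ ^ 2 / RCLike.re (φ (e i)) := Finset.sum_le_sum fun i hi ↦
        div_le_div_of_nonneg_right (re_sq_le _) (prob_nonneg i hi)
    _ ≤ RCLike.re (φ (a * star a)) := stmt2_general φ hφ s e he hne hsum a
    _ = RCLike.re (φ (a * a)) := by rw [ha.star_eq]

end PositiveFunctional

section TraceFunctional

open scoped MatrixOrder

variable {𝕜 n : Type*} [RCLike 𝕜] [Fintype n] {ρ X : Matrix n n 𝕜}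

theorem trace_mul_nonneg_of_posSemidef_s2 (hρ : ρ.PosSemidef) (hX : X.PosSemidef) :
    0 ≤ (ρ * X).trace := by
  classical
  obtain ⟨C, rfl⟩ := CStarAlgebra.nonneg_iff_eq_star_mul_self.mp hρ.nonneg
  rw [star_eq_conjTranspose, ← trace_mul_cycle]
  exact (hX.mul_mul_conjTranspose_same C).trace_nonneg

theorem trace_mul_eq_zero_iff_of_posDef (hρ : ρ.PosDef) (hX : X.PosSemidef) :
    (ρ * X).trace = 0 ↔ X = 0 := by
  classical
  obtain ⟨C, hC, rfl⟩ :=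
    CStarAlgebra.isStrictlyPositive_iff_eq_star_mul_self.mp hρ.isStrictlyPositive
  rw [star_eq_conjTranspose, ← trace_mul_cycle,
    (hX.mul_mul_conjTranspose_same C).trace_eq_zero_iff, ← star_eq_conjTranspose,
    hC.star.mul_left_eq_zero, hC.mul_right_eq_zero]

theorem trace_mul_conjTranspose_of_isHermitian (hρ : ρ.IsHermitian) (X : Matrix n n 𝕜) :
    (ρ * Xᴴ).trace = star (ρ * X).trace := by
  rw [← trace_conjTranspose, conjTranspose_mul, hρ.eq, trace_mul_comm]

/-- The expectation functional `X ↦ Tr (ρ X)` of a positive semidefinite matrix `ρ`, with no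
normalization of `Tr ρ`, as a positive linear map for the Loewner order. -/
def traceMulFunctional (hρ : ρ.PosSemidef) : Matrix n n 𝕜 →ₚ[𝕜] 𝕜 :=
  .mk₀ (traceLinearMap n 𝕜 𝕜 ∘ₗ LinearMap.mulLeft 𝕜 ρ) fun _ hX ↦
    trace_mul_nonneg_of_posSemidef_s2 hρ hX.posSemidef

theorem traceMulFunctional_apply (hρ : ρ.PosSemidef) (X : Matrix n n 𝕜) :
    traceMulFunctional hρ X = (ρ * X).trace := rfl

end TraceFunctional

/-- For a POVM `{E i}` of nonzero effects and a full-rank state `ρ`, the classical Fisher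
information along any Hermitian direction `A` never exceeds the quantum Fisher information:
`Σ_i (Re Tr[ρAE_i])² / Tr[ρE_i] ≤ Re Tr[ρA²]`. -/
theorem stmt2 (d : ℕ) (hd : 0 < d) (ι : Type) [Fintype ι]
    (ρ : Matrix (Fin d) (Fin d) ℂ) (hρ : ρ.PosDef)
    (E : ι → Matrix (Fin d) (Fin d) ℂ)
    (hE : ∀ i, (E i).PosSemidef) (hEne : ∀ i, E i ≠ 0)
    (hsum : ∑ i, E i = 1)
    (A : Matrix (Fin d) (Fin d) ℂ) (hA : A.IsHermitian) :
    ∑ i, (((ρ * A * E i).trace).re) ^ 2 / ((ρ * E i).trace).re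
      ≤ ((ρ * A * A).trace).re := by
  open scoped MatrixOrder in
  simpa only [traceMulFunctional_apply, ← mul_assoc, RCLike.re_eq_complex_re] using
    sum_re_apply_mul_sq_div_le_of_isSelfAdjoint (traceMulFunctional hρ.posSemidef)
      (trace_mul_conjTranspose_of_isHermitian hρ.isHermitian) Finset.univ E
      (fun i _ ↦ (hE i).nonneg)
      (fun i _ ↦ (trace_mul_eq_zero_iff_of_posDef hρ (hE i)).not.mpr (hEne i)) hsum.le hA
end

section
/- Let d be a positive integer, let ρ be a positive definite Hermitian d×d complex matrix, and let {E_i}_{i∈I} be a finite family of nonzero positive semidefinite Hermitian d×d matrices with Σ_i E_i = 𝟙. Define the frame operator F on Hermitian matrices by F(B) = Σ_i (Re Tr[ρE_iB] / Tr[ρE_i]) E_i. If B is a nonzero Hermitian matrix and λ is a real number with F(B) = λB, then 0 ≤ λ ≤ 1. -/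
open Matrix
open scoped ComplexOrder

/-- The frame operator `F(B) = Σ_i (Re Tr[ρE_iB] / Tr[ρE_i]) E_i`. -/
noncomputable def frameOp {d : ℕ} {ι : Type} [Fintype ι]
    (ρ : Matrix (Fin d) (Fin d) ℂ) (E : ι → Matrix (Fin d) (Fin d) ℂ)
    (B : Matrix (Fin d) (Fin d) ℂ) : Matrix (Fin d) (Fin d) ℂ :=
  ∑ i, ((((ρ * E i * B).trace).re / ((ρ * E i).trace).re) • E i)

/-!
On Hermitian matrices the form `⟨A, B⟩ = Re Tr[ρAB]` is symmetric, and
`⟨F(B), B⟩ = Σ_i (Re Tr[ρE_iB])² / Tr[ρE_i]`, which is visibly nonnegative. The Cauchy–Schwarz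
inequality for the positive form `(X, Y) ↦ Tr[ρXᴴE_iY]`, applied to `X = 𝟙` and `Y = B`, bounds the
`i`-th term by `Tr[ρBE_iB]`, and these bounds add up to at most `Tr[ρB²] = ⟨B, B⟩`. An eigenvector
thus satisfies `0 ≤ λ⟨B, B⟩ ≤ ⟨B, B⟩`. If `λ ≠ 0`, then `B = λ⁻¹F(B)` is automatically Hermitian,
and `⟨B, B⟩ > 0` even for `ρ` only semidefinite, since `⟨B, B⟩ = 0` would force `Bρ = 0` and
`F(B) = 0`.
-/

section Trace

variable {𝕜 m n : Type*} [RCLike 𝕜] [Fintype m] [Fintype n]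

open scoped MatrixOrder in
theorem exists_eq_conjTranspose_mul_self_of_posSemidef {A : Matrix n n 𝕜} (hA : A.PosSemidef) :
    ∃ C : Matrix n n 𝕜, A = Cᴴ * C := by
  classical
  exact CStarAlgebra.nonneg_iff_eq_star_mul_self.mp hA.nonneg

theorem trace_mul_nonneg_of_posSemidef_s3 {A B : Matrix n n 𝕜} (hA : A.PosSemidef)
    (hB : B.PosSemidef) : 0 ≤ (A * B).trace := by
  obtain ⟨C, rfl⟩ := exists_eq_conjTranspose_mul_self_of_posSemidef hA
  rw [← trace_mul_cycle]
  exact (hB.mul_mul_conjTranspose_same C).trace_nonneg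

theorem trace_mul_eq_zero_iff_of_posSemidef {A B : Matrix n n 𝕜} (hA : A.PosSemidef)
    (hB : B.PosSemidef) : (A * B).trace = 0 ↔ A * B = 0 := by
  obtain ⟨C, rfl⟩ := exists_eq_conjTranspose_mul_self_of_posSemidef hA
  obtain ⟨D, rfl⟩ := exists_eq_conjTranspose_mul_self_of_posSemidef hB
  have htrace : (Cᴴ * C * (Dᴴ * D)).trace = ((C * Dᴴ)ᴴ * (C * Dᴴ)).trace := by
    rw [← Matrix.mul_assoc, trace_mul_comm]
    simp only [conjTranspose_mul, conjTranspose_conjTranspose, Matrix.mul_assoc]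
  rw [htrace, trace_conjTranspose_mul_self_eq_zero_iff, conjTranspose_mul_self_mul_eq_zero,
    mul_conjTranspose_mul_self_eq_zero]

theorem trace_mul_pos_of_posDef {A B : Matrix n n 𝕜} (hA : A.PosDef) (hB : B.PosSemidef)
    (hB₀ : B ≠ 0) : 0 < (A * B).trace := by
  classical
  refine (trace_mul_nonneg_of_posSemidef_s3 hA.posSemidef hB).lt_of_ne' fun h ↦ hB₀ ?_
  exact hA.isUnit.mul_right_eq_zero.mp ((trace_mul_eq_zero_iff_of_posSemidef hA.posSemidef hB).mp h)

theorem trace_mul_conjTranspose_mul_self_pos {A : Matrix n n 𝕜} (hA : A.PosSemidef)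
    {B : Matrix m n 𝕜} (hAB : A * Bᴴ ≠ 0) : 0 < (A * (Bᴴ * B)).trace := by
  have hBB : (Bᴴ * B).PosSemidef := posSemidef_conjTranspose_mul_self B
  refine (trace_mul_nonneg_of_posSemidef_s3 hA hBB).lt_of_ne' fun h ↦ hAB ?_
  exact (mul_conjTranspose_mul_self_eq_zero B A).mp
    ((trace_mul_eq_zero_iff_of_posSemidef hA hBB).mp h)

open scoped MatrixOrder in
theorem trace_mul_conjTranspose_mul_mul_mono {A : Matrix n n 𝕜} (hA : A.PosSemidef)
    {P Q : Matrix m m 𝕜} (hPQ : P ≤ Q) (B : Matrix m n 𝕜) :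
    (A * (Bᴴ * P * B)).trace ≤ (A * (Bᴴ * Q * B)).trace := by
  have h := trace_mul_nonneg_of_posSemidef_s3 hA ((le_iff.mp hPQ).conjTranspose_mul_mul_same B)
  rwa [Matrix.mul_sub, Matrix.sub_mul, Matrix.mul_sub, trace_sub, sub_nonneg] at h

theorem norm_trace_mul_conjTranspose_mul_mul_sq_le {A P : Matrix n n 𝕜} (hA : A.PosSemidef)
    (hP : P.PosSemidef) (X Y : Matrix n n 𝕜) :
    ‖(A * (Xᴴ * P * Y)).trace‖ ^ 2 ≤
      RCLike.re (A * (Xᴴ * P * X)).trace * RCLike.re (A * (Yᴴ * P * Y)).trace := by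
  obtain ⟨C, rfl⟩ := exists_eq_conjTranspose_mul_self_of_posSemidef hP
  let := A.toMatrixSeminormedAddCommGroup hA
  let := A.toMatrixInnerProductSpace hA
  have hinner (U V : Matrix n n 𝕜) :
      inner 𝕜 (C * U) (C * V) = (A * (Uᴴ * (Cᴴ * C) * V)).trace := by
    change (C * V * A * (C * U)ᴴ).trace = _
    rw [Matrix.mul_assoc, trace_mul_comm, conjTranspose_mul]
    simp only [Matrix.mul_assoc]
  have hcs := inner_mul_inner_self_le (𝕜 := 𝕜) (C * X) (C * Y)
  rwa [norm_inner_symm (C * Y), ← sq, hinner, hinner, hinner] at hcs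

theorem re_trace_mul_mul_sq_le {A P : Matrix n n 𝕜} (hA : A.PosSemidef) (hP : P.PosSemidef)
    (B : Matrix n n 𝕜) :
    RCLike.re (A * P * B).trace ^ 2 ≤
      RCLike.re (A * (Bᴴ * P * B)).trace * RCLike.re (A * P).trace := by
  classical
  have hcs := norm_trace_mul_conjTranspose_mul_mul_sq_le hA hP 1 B
  rw [conjTranspose_one, Matrix.one_mul, Matrix.mul_one, ← Matrix.mul_assoc A P B, mul_comm] at hcs
  exact (sq_le_sq.mpr (RCLike.abs_re_le_norm _ |>.trans (le_abs_self _))).trans hcs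

end Trace

section FrameOp

variable {d : ℕ} {ι : Type} [Fintype ι] {ρ : Matrix (Fin d) (Fin d) ℂ}
  {E : ι → Matrix (Fin d) (Fin d) ℂ} {B : Matrix (Fin d) (Fin d) ℂ}

theorem isHermitian_frameOp (hE : ∀ i, (E i).IsHermitian) : (frameOp ρ E B).IsHermitian :=
  isSelfAdjoint_sum _ fun i _ ↦ (hE i).smul (.all _)

theorem frameOp_eq_zero_of_mul_eq_zero (hBρ : B * ρ = 0) : frameOp ρ E B = 0 := by
  refine Finset.sum_eq_zero fun i _ ↦ ?_
  rw [trace_mul_cycle, hBρ, Matrix.zero_mul, trace_zero, Complex.zero_re, zero_div, zero_smul]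

theorem re_trace_mul_frameOp_mul :
    (ρ * (frameOp ρ E B * B)).trace.re =
      ∑ i, (ρ * E i * B).trace.re ^ 2 / (ρ * E i).trace.re := by
  simp only [frameOp, Finset.sum_mul, Finset.mul_sum, trace_sum, Complex.re_sum, Matrix.smul_mul,
    Matrix.mul_smul, trace_smul, Complex.smul_re, smul_eq_mul, ← Matrix.mul_assoc]
  exact Finset.sum_congr rfl fun i _ ↦ by ring

theorem re_trace_mul_frameOp_mul_nonneg (hρE : ∀ i, 0 ≤ (ρ * E i).trace.re) :
    0 ≤ (ρ * (frameOp ρ E B * B)).trace.re := by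
  rw [re_trace_mul_frameOp_mul]
  exact Finset.sum_nonneg fun i _ ↦ div_nonneg (sq_nonneg _) (hρE i)

open scoped MatrixOrder

theorem re_trace_mul_frameOp_mul_le (hρ : ρ.PosSemidef) (hE : ∀ i, (E i).PosSemidef)
    (hρE : ∀ i, 0 < (ρ * E i).trace.re) (hsum : ∑ i, E i ≤ 1) :
    (ρ * (frameOp ρ E B * B)).trace.re ≤ (ρ * (Bᴴ * B)).trace.re := by
  calc (ρ * (frameOp ρ E B * B)).trace.re
      = ∑ i, (ρ * E i * B).trace.re ^ 2 / (ρ * E i).trace.re := re_trace_mul_frameOp_mul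
    _ ≤ ∑ i, (ρ * (Bᴴ * E i * B)).trace.re :=
        Finset.sum_le_sum fun i _ ↦ (div_le_iff₀ (hρE i)).mpr (re_trace_mul_mul_sq_le hρ (hE i) B)
    _ = (ρ * (Bᴴ * (∑ i, E i) * B)).trace.re := by
        rw [Finset.mul_sum, Finset.sum_mul, Finset.mul_sum, trace_sum, Complex.re_sum]
    _ ≤ (ρ * (Bᴴ * 1 * B)).trace.re :=
        (Complex.le_def.mp (trace_mul_conjTranspose_mul_mul_mono hρ hsum B)).1
    _ = (ρ * (Bᴴ * B)).trace.re := by rw [Matrix.mul_one]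

theorem stmt3_general (hρ : ρ.PosSemidef) (hE : ∀ i, (E i).PosSemidef)
    (hρE : ∀ i, 0 < (ρ * E i).trace) (hsum : ∑ i, E i ≤ 1) (hB₀ : B ≠ 0)
    {lam : ℝ} (hEig : frameOp ρ E B = lam • B) : 0 ≤ lam ∧ lam ≤ 1 := by
  rcases eq_or_ne lam 0 with rfl | hlam
  · exact ⟨le_rfl, zero_le_one⟩
  have hB : B.IsHermitian := by
    rw [← inv_smul_smul₀ hlam B, ← hEig]
    exact (isHermitian_frameOp fun i ↦ (hE i).isHermitian).smul (.all _)
  have hρB : ρ * Bᴴ ≠ 0 := fun h ↦ by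
    have hBρ : B * ρ = 0 := by
      simpa [hρ.isHermitian.eq] using congrArg conjTranspose h
    exact smul_ne_zero hlam hB₀ (hEig.symm.trans (frameOp_eq_zero_of_mul_eq_zero hBρ))
  have hpos : 0 < (ρ * (Bᴴ * B)).trace.re :=
    (Complex.pos_iff.mp (trace_mul_conjTranspose_mul_self_pos hρ hρB)).1
  have hquad : (ρ * (frameOp ρ E B * B)).trace.re = lam * (ρ * (Bᴴ * B)).trace.re := by
    rw [hEig, hB.eq, Matrix.smul_mul, Matrix.mul_smul, trace_smul, Complex.smul_re, smul_eq_mul]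
  have hweight (i : ι) : 0 < (ρ * E i).trace.re := (Complex.pos_iff.mp (hρE i)).1
  have hlower := re_trace_mul_frameOp_mul_nonneg (B := B) fun i ↦ (hweight i).le
  have hupper := re_trace_mul_frameOp_mul_le (B := B) hρ hE hweight hsum
  rw [hquad] at hlower hupper
  exact ⟨nonneg_of_mul_nonneg_left hlower hpos, (mul_le_iff_le_one_left hpos).mp hupper⟩

end FrameOp

/-- Every eigenvalue of the frame operator lies in the interval `[0, 1]`. -/
theorem stmt3 (d : ℕ) (hd : 0 < d) (ι : Type) [Fintype ι]
    (ρ : Matrix (Fin d) (Fin d) ℂ) (hρ : ρ.PosDef)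
    (E : ι → Matrix (Fin d) (Fin d) ℂ)
    (hE : ∀ i, (E i).PosSemidef) (hEne : ∀ i, E i ≠ 0)
    (hsum : ∑ i, E i = 1)
    (B : Matrix (Fin d) (Fin d) ℂ) (hB : B.IsHermitian) (hBne : B ≠ 0)
    (lam : ℝ) (hEig : frameOp ρ E B = lam • B) :
    0 ≤ lam ∧ lam ≤ 1 := by
  open scoped MatrixOrder in
  exact stmt3_general hρ.posSemidef hE (fun i ↦ trace_mul_pos_of_posDef hρ (hE i) (hEne i))
    hsum.le hBne hEig
end

section
/- Let d be a positive integer, let ρ be a positive definite Hermitian d×d complex matrix with trace 1, and let {E_i}_{i∈I} be a finite family of nonzero positive semidefinite Hermitian d×d matrices with Σ_i E_i = 𝟙 whose real span is the whole space of Hermitian d×d matrices (an informationally complete POVM). If a Hermitian matrix A satisfies F(A) = A, where F(A) = Σ_i (Re Tr[ρE_iA] / Tr[ρE_i]) E_i, then A is a real scalar multiple of the identity matrix. In particular, the eigenvalue 1 of the frame operator F is nondegenerate, with eigenvector 𝟙. -/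
open Matrix
open scoped ComplexOrder

/-!
On Hermitian matrices consider the real inner product `⟨X, Y⟩ = Re Tr[ρXY]`, and let
`aᵢ = Re Tr[ρEᵢA] / Tr[ρEᵢ]`, so that `F(A) = Σᵢ aᵢ Eᵢ`. Expanding the square gives
`⟨A - F(A), A⟩ = Σᵢ Tr[ρ (A - aᵢ) Eᵢ (A - aᵢ)]`, a sum of nonnegative terms. If `F(A) = A`, all
terms vanish, and since `ρ` is invertible this forces `Eᵢ A = aᵢ Eᵢ`. Hence `A` commutes with every
`Eᵢ`, so `A` is scalar as soon as the `Eᵢ` have trivial commutant.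
-/

section TracePositivity

variable {m n 𝕜 : Type*} [Fintype m] [Fintype n] [RCLike 𝕜]

open scoped MatrixOrder Matrix.Norms.L2Operator in
lemma exists_eq_conjTranspose_mul_self {M : Matrix n n 𝕜} (hM : M.PosSemidef) :
    ∃ B : Matrix n n 𝕜, M = Bᴴ * B := by
  classical exact CStarAlgebra.nonneg_iff_eq_star_mul_self.mp hM.nonneg

lemma trace_mul_nonneg {ρ M : Matrix n n 𝕜} (hρ : ρ.PosSemidef) (hM : M.PosSemidef) :
    0 ≤ (ρ * M).trace := by
  obtain ⟨B, rfl⟩ := exists_eq_conjTranspose_mul_self hM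
  rw [← Matrix.mul_assoc, trace_mul_cycle]
  exact (hρ.mul_mul_conjTranspose_same B).trace_nonneg

lemma trace_mul_conjTranspose_mul_mul_eq_zero_iff {ρ : Matrix m m 𝕜} {e : Matrix n n 𝕜}
    (hρ : ρ.PosSemidef) (he : e.PosSemidef) (X : Matrix n m 𝕜) :
    (ρ * (Xᴴ * e * X)).trace = 0 ↔ e * X * ρ = 0 := by
  refine ⟨fun h => ?_, fun h => ?_⟩
  · obtain ⟨R, rfl⟩ := exists_eq_conjTranspose_mul_self hρ
    obtain ⟨B, rfl⟩ := exists_eq_conjTranspose_mul_self he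
    have htrace : ((B * X * Rᴴ)ᴴ * (B * X * Rᴴ)).trace = 0 := by
      rw [← h, Matrix.mul_assoc Rᴴ R, trace_mul_comm Rᴴ]
      simp only [conjTranspose_mul, conjTranspose_conjTranspose, Matrix.mul_assoc]
    calc Bᴴ * B * X * (Rᴴ * R) = Bᴴ * (B * X * Rᴴ) * R := by simp only [Matrix.mul_assoc]
      _ = 0 := by
        rw [trace_conjTranspose_mul_self_eq_zero_iff.mp htrace, Matrix.mul_zero, Matrix.zero_mul]
  · rw [trace_mul_comm, Matrix.mul_assoc Xᴴ, Matrix.mul_assoc Xᴴ, h, Matrix.mul_zero, trace_zero]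

lemma re_trace_mul_conjTranspose_mul_mul_eq_zero_iff {ρ : Matrix m m 𝕜} {e : Matrix n n 𝕜}
    (hρ : ρ.PosDef) (he : e.PosSemidef) (X : Matrix n m 𝕜) :
    RCLike.re (ρ * (Xᴴ * e * X)).trace = 0 ↔ e * X = 0 := by
  classical
  have hnonneg := trace_mul_nonneg hρ.posSemidef (he.conjTranspose_mul_mul_same X)
  have hre : RCLike.re (ρ * (Xᴴ * e * X)).trace = 0 ↔ (ρ * (Xᴴ * e * X)).trace = 0 :=
    ⟨fun h => RCLike.ext (by simpa using h) (by simpa using (RCLike.nonneg_iff.mp hnonneg).2),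
      fun h => by rw [h, map_zero]⟩
  rw [hre, trace_mul_conjTranspose_mul_mul_eq_zero_iff hρ.posSemidef he]
  refine ⟨fun h => ?_, fun h => by rw [h, Matrix.zero_mul]⟩
  have hdet : IsUnit ρ.det := (isUnit_iff_isUnit_det ρ).mp hρ.isUnit
  rw [← mul_nonsing_inv_cancel_right ρ (e * X) hdet, h, Matrix.zero_mul]

lemma re_trace_mul_eq_zero_iff {ρ e : Matrix n n 𝕜} (hρ : ρ.PosDef) (he : e.PosSemidef) :
    RCLike.re (ρ * e).trace = 0 ↔ e = 0 := by
  classical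
  simpa using re_trace_mul_conjTranspose_mul_mul_eq_zero_iff hρ he 1

lemma re_trace_mul_mul_comm {ρ e A : Matrix n n 𝕜} (hρ : ρ.IsHermitian) (he : e.IsHermitian)
    (hA : A.IsHermitian) :
    RCLike.re (ρ * (A * e)).trace = RCLike.re (ρ * (e * A)).trace := by
  have hstar : star (ρ * (e * A)).trace = (ρ * (A * e)).trace := by
    rw [← trace_conjTranspose, conjTranspose_mul, conjTranspose_mul, hρ.eq, he.eq, hA.eq,
      trace_mul_comm]
  rw [← hstar, RCLike.star_def, RCLike.conj_re]

end TracePositivity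

section FrameOperator

variable {n 𝕜 : Type*} [Fintype n] [RCLike 𝕜]

/-- The real part of the weak value of the observable `A` in the state `ρ` post-selected on the
effect `e`; it is the coefficient of `e` in the image of `A` under the frame operator.
Junk value `0` if `Re Tr[ρe] = 0`. -/
noncomputable def weakValue (ρ e A : Matrix n n 𝕜) : ℝ :=
  RCLike.re (ρ * e * A).trace / RCLike.re (ρ * e).trace

lemma re_trace_mul_sub_weakValue_sq [DecidableEq n] {ρ e A : Matrix n n 𝕜} (hρ : ρ.IsHermitian)
    (he : e.IsHermitian) (hA : A.IsHermitian) (hρe : RCLike.re (ρ * e).trace ≠ 0) :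
    RCLike.re (ρ * ((A - weakValue ρ e A • 1)ᴴ * e * (A - weakValue ρ e A • 1))).trace =
      RCLike.re (ρ * (A * e * A)).trace - weakValue ρ e A * RCLike.re (ρ * (e * A)).trace := by
  have hweak : RCLike.re (ρ * (e * A)).trace = weakValue ρ e A * RCLike.re (ρ * e).trace := by
    rw [weakValue, div_mul_cancel₀ _ hρe, Matrix.mul_assoc]
  generalize weakValue ρ e A = a at hweak ⊢
  have hexpand : ρ * ((A - a • 1)ᴴ * e * (A - a • 1)) = ρ * (A * e * A) - a • (ρ * (A * e)) -
      a • (ρ * (e * A)) + (a * a) • (ρ * e) := by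
    simp only [conjTranspose_sub, conjTranspose_smul, conjTranspose_one, star_trivial, hA.eq,
      sub_mul, mul_sub, Matrix.smul_mul, Matrix.mul_smul, Matrix.mul_one, Matrix.one_mul, smul_smul]
    abel
  simp only [hexpand, trace_add, trace_sub, trace_smul, map_add, map_sub, RCLike.smul_re,
    re_trace_mul_mul_comm hρ he hA, hweak]
  ring

variable {ι : Type*} [Fintype ι] {ρ A : Matrix n n 𝕜} {E : ι → Matrix n n 𝕜}

lemma sum_re_trace_mul_sub_weakValue_sq [DecidableEq n] (hρ : ρ.IsHermitian)
    (hE : ∀ i, (E i).IsHermitian) (hρE : ∀ i, RCLike.re (ρ * E i).trace ≠ 0)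
    (hsum : ∑ i, E i = 1) (hA : A.IsHermitian) :
    ∑ i, RCLike.re
        (ρ * ((A - weakValue ρ (E i) A • 1)ᴴ * E i * (A - weakValue ρ (E i) A • 1))).trace =
      RCLike.re (ρ * ((A - ∑ i, weakValue ρ (E i) A • E i) * A)).trace := by
  have hsq : ∑ i, RCLike.re (ρ * (A * E i * A)).trace = RCLike.re (ρ * (A * A)).trace := by
    rw [← map_sum, ← trace_sum, ← Matrix.mul_sum, ← Matrix.sum_mul, ← Matrix.mul_sum, hsum,
      Matrix.mul_one]
  have hframe : ∑ i, weakValue ρ (E i) A * RCLike.re (ρ * (E i * A)).trace =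
      RCLike.re (ρ * ((∑ i, weakValue ρ (E i) A • E i) * A)).trace := by
    simp only [Matrix.sum_mul, Matrix.mul_sum, trace_sum, map_sum, Matrix.smul_mul,
      Matrix.mul_smul, trace_smul, RCLike.smul_re]
  rw [Finset.sum_congr rfl fun i _ => re_trace_mul_sub_weakValue_sq hρ (hE i) hA (hρE i),
    Finset.sum_sub_distrib, hsq, hframe, Matrix.sub_mul, Matrix.mul_sub, trace_sub, map_sub]

lemma mul_eq_weakValue_smul_of_fixed [DecidableEq n] (hρ : ρ.PosDef)
    (hE : ∀ i, (E i).PosSemidef) (hE_ne : ∀ i, E i ≠ 0) (hsum : ∑ i, E i = 1)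
    (hA : A.IsHermitian) (hFA : ∑ i, weakValue ρ (E i) A • E i = A) (i : ι) :
    E i * A = weakValue ρ (E i) A • E i := by
  have hzero := sum_re_trace_mul_sub_weakValue_sq hρ.isHermitian (fun i => (hE i).isHermitian)
    (fun i => mt (re_trace_mul_eq_zero_iff hρ (hE i)).mp (hE_ne i)) hsum hA
  rw [hFA, sub_self, Matrix.zero_mul, Matrix.mul_zero, trace_zero, map_zero,
    Finset.sum_eq_zero_iff_of_nonneg fun i _ => (RCLike.nonneg_iff.mp <|
      trace_mul_nonneg hρ.posSemidef ((hE i).conjTranspose_mul_mul_same _)).1] at hzero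
  have hmul := (re_trace_mul_conjTranspose_mul_mul_eq_zero_iff hρ (hE i) _).mp
    (hzero i (Finset.mem_univ i))
  rwa [Matrix.mul_sub, Matrix.mul_smul, Matrix.mul_one, sub_eq_zero] at hmul

end FrameOperator

section Commutant

lemma commute_of_mul_eq_smul {k R : Type*} [Star k] [TrivialStar k] [Mul R] [StarMul R] [SMul k R]
    [StarModule k R] {e a : R} {c : k} (he : IsSelfAdjoint e) (ha : IsSelfAdjoint a)
    (h : e * a = c • e) : Commute e a := by
  have hstar : a * e = c • e := by
    simpa only [star_mul, star_smul, star_trivial, he.star_eq, ha.star_eq] using congrArg star h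
  exact h.trans hstar.symm

variable {n : Type*} [Fintype n] [DecidableEq n]

lemma mem_range_scalar_of_commute_isHermitian {R : Type*} [Semiring R] [StarRing R]
    {A : Matrix n n R} (hA : ∀ H : Matrix n n R, H.IsHermitian → Commute H A) :
    A ∈ Set.range (scalar n) := by
  refine mem_range_scalar_of_commute_single fun i j hij => ?_
  have hdiag : (single i i (1 : R)).IsHermitian := by simp [IsHermitian]
  have hsymm : (single i j (1 : R) + single j i 1).IsHermitian := by simp [IsHermitian, add_comm]
  have hprod : single i i (1 : R) * (single i j 1 + single j i 1) = single i j 1 := by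
    simp [mul_add, hij]
  simpa only [hprod] using (hA _ hdiag).mul_left (hA _ hsymm)

lemma centralizer_eq_bot_of_isHermitian_mem_span {k R : Type*} [CommSemiring k] [CommSemiring R]
    [StarRing R] [Algebra k R] {S : Set (Matrix n n R)}
    (hS : ∀ H : Matrix n n R, H.IsHermitian → H ∈ Submodule.span k S) :
    Subalgebra.centralizer R S = ⊥ := by
  refine eq_bot_iff.mpr fun A hA => ?_
  have hspan : Submodule.span k S ≤ (Subalgebra.centralizer k {A}).toSubmodule :=
    Submodule.span_le.mpr fun e he => by
      rintro _ rfl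
      exact (hA e he).symm
  obtain ⟨c, rfl⟩ := mem_range_scalar_of_commute_isHermitian fun H hH =>
    (hspan (hS H hH) A rfl).symm
  exact ⟨c, rfl⟩

lemma exists_real_smul_one_of_isHermitian_of_mem_bot {𝕜 : Type*} [RCLike 𝕜] {A : Matrix n n 𝕜}
    (hA : A.IsHermitian) (hbot : A ∈ (⊥ : Subalgebra 𝕜 (Matrix n n 𝕜))) :
    ∃ c : ℝ, A = c • (1 : Matrix n n 𝕜) := by
  obtain ⟨z, rfl⟩ := Algebra.mem_bot.mp hbot
  refine ⟨RCLike.re z, Matrix.ext fun i j => ?_⟩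
  obtain rfl | hij := eq_or_ne i j
  · have hz : star z = z := by simpa [algebraMap_matrix_apply] using hA.apply i i
    simp [algebraMap_matrix_apply, RCLike.real_smul_eq_coe_mul, RCLike.conj_eq_iff_re.mp hz]
  · simp [algebraMap_matrix_apply, hij]

end Commutant

theorem stmt5_general {n 𝕜 ι : Type*} [Fintype n] [DecidableEq n] [RCLike 𝕜] [Fintype ι]
    {ρ A : Matrix n n 𝕜} {E : ι → Matrix n n 𝕜} (hρ : ρ.PosDef)
    (hE : ∀ i, (E i).PosSemidef) (hE_ne : ∀ i, E i ≠ 0) (hsum : ∑ i, E i = 1)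
    (hirr : Subalgebra.centralizer 𝕜 (Set.range E) = ⊥)
    (hFA : ∑ i, weakValue ρ (E i) A • E i = A) :
    ∃ c : ℝ, A = c • (1 : Matrix n n 𝕜) := by
  have hA : A.IsHermitian := hFA ▸ isSelfAdjoint_sum _ fun i _ =>
    (hE i).isHermitian.smul (IsSelfAdjoint.all _)
  have hcomm : ∀ i, Commute (E i) A := fun i =>
    commute_of_mul_eq_smul (hE i).isHermitian hA
      (mul_eq_weakValue_smul_of_fixed hρ hE hE_ne hsum hA hFA i)
  refine exists_real_smul_one_of_isHermitian_of_mem_bot hA (hirr ▸ ?_)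
  exact Set.forall_mem_range.mpr hcomm

/-- For a full-rank density matrix `ρ` and an informationally complete POVM,
every fixed point of the frame operator is a real multiple of the identity:
the eigenvalue `1` is nondegenerate, with eigenvector `𝟙`. -/
theorem stmt5 (d : ℕ) (hd : 0 < d) (ι : Type) [Fintype ι]
    (ρ : Matrix (Fin d) (Fin d) ℂ) (hρ : ρ.PosDef) (hρtr : ρ.trace = 1)
    (E : ι → Matrix (Fin d) (Fin d) ℂ)
    (hE : ∀ i, (E i).PosSemidef) (hEne : ∀ i, E i ≠ 0)
    (hsum : ∑ i, E i = 1)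
    (hIC : ∀ A : Matrix (Fin d) (Fin d) ℂ, A.IsHermitian →
      A ∈ Submodule.span ℝ (Set.range E))
    (A : Matrix (Fin d) (Fin d) ℂ) (hA : A.IsHermitian)
    (hFA : frameOp ρ E A = A) :
    ∃ c : ℝ, A = c • (1 : Matrix (Fin d) (Fin d) ℂ) := by
  exact stmt5_general hρ hE hEne hsum (centralizer_eq_bot_of_isHermitian_mem_span hIC) hFA
end

section
/- Let d be a positive integer, let ρ be a positive definite Hermitian d×d complex matrix, and let {E_i}_{i∈I} be a finite family of nonzero positive semidefinite Hermitian d×d matrices with Σ_i E_i = 𝟙. If a Hermitian matrix A satisfies Σ_i (Re Tr[ρE_iA])² / Tr[ρE_i] = Re Tr[ρA²] (i.e., the bound ⟨A,F(A)⟩_ρ ≤ ⟨A,A⟩_ρ is saturated), then for every i ∈ I there exists a real number γ_i such that E_i A = γ_i E_i. -/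
open Matrix
open scoped ComplexOrder

/-! Cauchy–Schwarz for the semi-inner product `φ (star x * e * y)` and the vectors `1`, `a` gives
`φ (e * a) ^ 2 / φ e ≤ φ (a * e * a)`, and the defect is `φ ((a - γ) * e * (a - γ))` with
`γ = φ (e * a) / φ e`. Summing over the effects bounds the left-hand side of the saturation
condition by `φ (a * a)`, so saturation makes every defect vanish, and faithfulness of `φ` turns a
vanishing defect into `e * (a - γ) = 0`. For matrices, `φ x = Re Tr[ρ x]`. -/

section StarOrderedAlgebra

variable {R : Type*} [Ring R] [Algebra ℝ R]

lemma isSelfAdjoint_sub_smul_one [StarRing R] [StarModule ℝ R] {a : R} (ha : IsSelfAdjoint a)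
    (γ : ℝ) : IsSelfAdjoint (a - γ • (1 : R)) :=
  ha.sub (.smul (.all γ) (.one R))

variable [PartialOrder R]

/-- The mean of `a` in the effect `e`, as measured by `φ`: the coefficient of `e` in the frame
operator applied to `a`. It has the junk value `0` when `φ e = 0`. -/
noncomputable def effectMean (φ : R →ₚ[ℝ] ℝ) (e a : R) : ℝ :=
  φ (e * a) / φ e

variable [StarRing R]

/-- Faithfulness of a positive functional, stated on the elements `star x * x` only, so that it
says that the form `φ (star x * y)` is definite and no square roots are needed to use it. -/
def IsFaithful (φ : R →ₚ[ℝ] ℝ) : Prop :=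
  ∀ x, φ (star x * x) = 0 → x = 0

variable {φ : R →ₚ[ℝ] ℝ} {e a : R}

lemma map_mul_comm_of_isSelfAdjoint (hstar : ∀ x, φ (star x) = φ x) (he : IsSelfAdjoint e)
    (ha : IsSelfAdjoint a) : φ (e * a) = φ (a * e) := by
  rw [← hstar, star_mul, he.star_eq, ha.star_eq]

lemma map_conj_sub_effectMean (hstar : ∀ x, φ (star x) = φ x) (he : IsSelfAdjoint e)
    (ha : IsSelfAdjoint a) (hφe : φ e ≠ 0) :
    φ ((a - effectMean φ e a • 1) * e * (a - effectMean φ e a • 1)) =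
      φ (a * e * a) - φ (e * a) ^ 2 / φ e := by
  have expand (γ : ℝ) : (a - γ • 1) * e * (a - γ • 1) =
      a * e * a - γ • (a * e) - γ • (e * a) + γ ^ 2 • e := by
    simp only [sub_mul, mul_sub, smul_mul_assoc, mul_smul_comm, one_mul, mul_one, smul_sub,
      smul_smul, sq]
    abel
  rw [expand]
  simp only [map_add, map_sub, map_smul, smul_eq_mul, map_mul_comm_of_isSelfAdjoint hstar ha he,
    effectMean]
  field_simp
  ring

variable [StarOrderedRing R]

namespace IsFaithful

lemma mul_eq_zero_of_map_conj_eq_zero (hφ : IsFaithful φ) (he : 0 ≤ e) {x : R}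
    (h : φ (star x * e * x) = 0) : e * x = 0 := by
  rw [StarOrderedRing.nonneg_iff] at he
  induction he using AddSubmonoid.closure_induction with
  | mem _ hs =>
    obtain ⟨s, rfl⟩ := hs
    have hsx : s * x = 0 := hφ _ (by simpa only [star_mul, mul_assoc] using h)
    rw [mul_assoc, hsx, mul_zero]
  | zero => exact zero_mul x
  | add y z hy hz ihy ihz =>
    rw [← StarOrderedRing.nonneg_iff] at hy hz
    rw [mul_add, add_mul, map_add, add_eq_zero_iff_of_nonneg
      (φ.map_nonneg (star_left_conjugate_nonneg hy x))
      (φ.map_nonneg (star_left_conjugate_nonneg hz x))] at h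
    rw [add_mul, ihy h.1, ihz h.2, add_zero]

lemma map_pos (hφ : IsFaithful φ) (he : 0 ≤ e) (he0 : e ≠ 0) : 0 < φ e := by
  refine (φ.map_nonneg he).lt_of_ne' fun h ↦ he0 ?_
  simpa only [mul_one] using
    hφ.mul_eq_zero_of_map_conj_eq_zero he (x := 1) (by simpa only [star_one, one_mul, mul_one])

end IsFaithful

lemma sum_map_conj_le {ι : Type*} {s : Finset ι} {e : ι → R} (hsum : ∑ i ∈ s, e i ≤ 1)
    (ha : IsSelfAdjoint a) : ∑ i ∈ s, φ (a * e i * a) ≤ φ (a * a) := by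
  calc ∑ i ∈ s, φ (a * e i * a) = φ (a * (∑ i ∈ s, e i) * a) := by
        rw [Finset.mul_sum, Finset.sum_mul, map_sum]
    _ ≤ φ (a * 1 * a) := OrderHomClass.mono φ (ha.conjugate_le_conjugate hsum)
    _ = φ (a * a) := by rw [mul_one]

variable [StarModule ℝ R]

lemma sq_map_mul_div_le (hstar : ∀ x, φ (star x) = φ x) (he : 0 ≤ e) (ha : IsSelfAdjoint a)
    (hφe : φ e ≠ 0) : φ (e * a) ^ 2 / φ e ≤ φ (a * e * a) := by
  rw [← sub_nonneg, ← map_conj_sub_effectMean hstar (.of_nonneg he) ha hφe]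
  exact φ.map_nonneg (IsSelfAdjoint.conjugate_nonneg he (isSelfAdjoint_sub_smul_one ha _))

lemma IsFaithful.mul_eq_effectMean_smul (hφ : IsFaithful φ) (hstar : ∀ x, φ (star x) = φ x)
    (he : 0 ≤ e) (ha : IsSelfAdjoint a) (hφe : φ e ≠ 0)
    (heq : φ (e * a) ^ 2 / φ e = φ (a * e * a)) : e * a = effectMean φ e a • e := by
  have hdefect : φ (star (a - effectMean φ e a • 1) * e * (a - effectMean φ e a • 1)) = 0 := by
    rw [(isSelfAdjoint_sub_smul_one ha _).star_eq,
      map_conj_sub_effectMean hstar (.of_nonneg he) ha hφe, heq, sub_self]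
  have hmul := hφ.mul_eq_zero_of_map_conj_eq_zero he hdefect
  rwa [mul_sub, mul_smul_comm, mul_one, sub_eq_zero] at hmul

theorem stmt15_general {ι : Type*} [Fintype ι] (hφ : IsFaithful φ)
    (hstar : ∀ x, φ (star x) = φ x) {e : ι → R} (he : ∀ i, 0 ≤ e i) (hne : ∀ i, e i ≠ 0)
    (hsum : ∑ i, e i ≤ 1) (ha : IsSelfAdjoint a)
    (hsat : ∑ i, φ (e i * a) ^ 2 / φ (e i) = φ (a * a)) (i : ι) :
    e i * a = effectMean φ (e i) a • e i := by
  have hφe (j : ι) : φ (e j) ≠ 0 := (hφ.map_pos (he j) (hne j)).ne'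
  have hle (j : ι) : φ (e j * a) ^ 2 / φ (e j) ≤ φ (a * e j * a) :=
    sq_map_mul_div_le hstar (he j) ha (hφe j)
  have hsum_eq : ∑ j, φ (e j * a) ^ 2 / φ (e j) = ∑ j, φ (a * e j * a) :=
    (Finset.sum_le_sum fun j _ ↦ hle j).antisymm (hsat ▸ sum_map_conj_le hsum ha)
  have hterm : φ (e i * a) ^ 2 / φ (e i) = φ (a * e i * a) :=
    (Finset.sum_eq_sum_iff_of_le fun j _ ↦ hle j).1 hsum_eq i (Finset.mem_univ i)
  exact hφ.mul_eq_effectMean_smul hstar (he i) ha (hφe i) hterm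

end StarOrderedAlgebra

section ReTrace

open scoped MatrixOrder

variable {n 𝕜 : Type*} [Fintype n] [RCLike 𝕜] {ρ : Matrix n n 𝕜}

lemma trace_mul_star_mul_self_nonneg (hρ : ρ.PosSemidef) (x : Matrix n n 𝕜) :
    0 ≤ (ρ * (star x * x)).trace := by
  rw [← Matrix.mul_assoc, trace_mul_cycle]
  exact (hρ.mul_mul_conjTranspose_same x).trace_nonneg

lemma eq_zero_of_trace_mul_star_mul_self_eq_zero (hρ : ρ.PosDef) {x : Matrix n n 𝕜}
    (h : (ρ * (star x * x)).trace = 0) : x = 0 := by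
  classical
  obtain ⟨y, hy, rfl⟩ :=
    CStarAlgebra.isStrictlyPositive_iff_eq_star_mul_self.1 hρ.isStrictlyPositive
  have hsquare : x * (star y * y) * star x = (x * star y) * (x * star y)ᴴ := by
    simp only [star_eq_conjTranspose, conjTranspose_mul, conjTranspose_conjTranspose,
      Matrix.mul_assoc]
  rw [← Matrix.mul_assoc, trace_mul_cycle, hsquare, trace_mul_conjTranspose_self_eq_zero_iff] at h
  exact hy.star.mul_left_eq_zero.1 h

/-- The unnormalised state `x ↦ Re Tr[ρ x]` of a positive semidefinite matrix `ρ`. Taking the real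
part makes `φ (A * B)` the state-dependent inner product of Hermitian matrices `A` and `B`. -/
noncomputable def reTraceMul (ρ : Matrix n n 𝕜) (hρ : ρ.PosSemidef) : Matrix n n 𝕜 →ₚ[ℝ] ℝ :=
  .mk₀ (RCLike.reLm ∘ₗ traceLinearMap n ℝ 𝕜 ∘ₗ LinearMap.mulLeft ℝ ρ) fun x hx ↦ by
    classical
    obtain ⟨y, rfl⟩ := CStarAlgebra.nonneg_iff_eq_star_mul_self.1 hx
    exact (RCLike.nonneg_iff.1 (trace_mul_star_mul_self_nonneg hρ y)).1

lemma reTraceMul_apply (hρ : ρ.PosSemidef) (x : Matrix n n 𝕜) :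
    reTraceMul ρ hρ x = RCLike.re (ρ * x).trace := rfl

lemma reTraceMul_star (hρ : ρ.PosSemidef) (x : Matrix n n 𝕜) :
    reTraceMul ρ hρ (star x) = reTraceMul ρ hρ x := by
  have htrace : (ρ * star x).trace = star (ρ * x).trace := by
    rw [← trace_conjTranspose, conjTranspose_mul, hρ.isHermitian.eq, trace_mul_comm,
      star_eq_conjTranspose]
  rw [reTraceMul_apply, reTraceMul_apply, htrace, RCLike.star_def, RCLike.conj_re]

lemma isFaithful_reTraceMul [DecidableEq n] (hρ : ρ.PosDef) :
    IsFaithful (reTraceMul ρ hρ.posSemidef) := by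
  intro x hre
  have him := (RCLike.nonneg_iff.1 (trace_mul_star_mul_self_nonneg hρ.posSemidef x)).2
  exact eq_zero_of_trace_mul_star_mul_self_eq_zero hρ <|
    RCLike.ext (hre.trans (map_zero _).symm) (him.trans (map_zero _).symm)

end ReTrace

/-- If the Fisher-information bound `⟨A, F(A)⟩_ρ ≤ ⟨A, A⟩_ρ` is saturated, i.e.
`Σ_i (Re Tr[ρE_iA])² / Tr[ρE_i] = Re Tr[ρA²]`, then each effect satisfies
`E_i A = γ_i E_i` for some real scalar `γ_i`. -/
theorem stmt15 (d : ℕ) (hd : 0 < d) (ι : Type) [Fintype ι]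
    (ρ : Matrix (Fin d) (Fin d) ℂ) (hρ : ρ.PosDef)
    (E : ι → Matrix (Fin d) (Fin d) ℂ)
    (hE : ∀ i, (E i).PosSemidef) (hEne : ∀ i, E i ≠ 0)
    (hsum : ∑ i, E i = 1)
    (A : Matrix (Fin d) (Fin d) ℂ) (hA : A.IsHermitian)
    (hsat : ∑ i, (((ρ * E i * A).trace).re) ^ 2 / ((ρ * E i).trace).re
      = ((ρ * A * A).trace).re) :
    ∀ i, ∃ γ : ℝ, E i * A = γ • E i := by
  simp only [Matrix.mul_assoc] at hsat
  open scoped MatrixOrder in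
  exact fun i ↦ ⟨_, stmt15_general (isFaithful_reTraceMul hρ) (reTraceMul_star hρ.posSemidef)
    (fun i ↦ (hE i).nonneg) hEne hsum.le hA.isSelfAdjoint hsat i⟩
end
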